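/- arXiv:0904.0390 — 3 statements merged into one kernel-verified Lean document; each statement's English description precedes it below -/
import Mathlib

section
/- Let X be a complete normed vector space, t₀ ≥ 0, θ ∈ (0, 1/2), and C₁, C₂ > 0. Let u : [t₀,∞) → X be differentiable with continuous derivative u', and let Φ : [t₀,∞) → ℝ be differentiable with Φ(t) > 0 for all t ≥ t₀. Assume that for all t ≥ t₀: (i) θ·Φ(t)^{θ−1}·Φ'(t) ≤ −C₁·‖u'(t)‖, and (ii) Φ'(t) + C₂·Φ(t)^{2(1−θ)} ≤ 0. Then there exist u_∞ ∈ X and a constant C > 0 such that ‖u(t) − u_∞‖ ≤ C·(1+t)^{−θ/(1−2θ)} for all t ≥ t₀. -/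
/-!
Write `q = 1 - 2θ > 0`. The energy inequality says that `Φ ^ (-q)` has derivative at least
`q C₂`, so it grows at least linearly, and hence `Φ t ^ θ ≤ K (1 + t) ^ (-(θ / q))`
(`energy_rpow_decay`). The Łojasiewicz–Simon inequality bounds `‖u'‖` by the derivative of
`-Φ ^ θ / C₁`, so `‖u t - u s‖ ≤ Φ s ^ θ / C₁` for `s ≤ t` (`dist_le_energy_rpow`).
Thus `u` is Cauchy at infinity, and letting `t → ∞` in this bound gives the rate.
-/

open Set

open Filter Topology

/-- The differential inequality for the energy gap alone gives the algebraic decay of `Φ ^ θ`. -/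
lemma energy_rpow_decay {t₀ θ C₂ : ℝ} (ht₀ : 0 ≤ t₀) (hθ : θ ∈ Ioo (0 : ℝ) (1 / 2)) (hC₂ : 0 < C₂)
    {Φ Φ' : ℝ → ℝ} (hΦ : ∀ t ≥ t₀, HasDerivWithinAt Φ (Φ' t) (Ici t₀) t)
    (hΦpos : ∀ t ≥ t₀, 0 < Φ t)
    (hii : ∀ t ≥ t₀, Φ' t + C₂ * Φ t ^ (2 * (1 - θ)) ≤ 0) :
    ∃ K > 0, ∀ t ≥ t₀, Φ t ^ θ ≤ K * (1 + t) ^ (-(θ / (1 - 2 * θ))) := by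
  obtain ⟨hθ0, hθ1⟩ := hθ
  set q := 1 - 2 * θ with hq
  have hq0 : 0 < q := by linarith
  have h1 : 0 < 1 + t₀ := by linarith
  -- `c` is the largest slope for which `c (1 + t)` stays below `Φ ^ (-q)`, both initially
  -- and in derivative.
  set c := min (Φ t₀ ^ (-q) / (1 + t₀)) (q * C₂) with hc
  have hc0 : 0 < c :=
    lt_min (div_pos (Real.rpow_pos_of_pos (hΦpos t₀ le_rfl) _) h1) (mul_pos hq0 hC₂)
  have hd : ∀ t ≥ t₀, HasDerivWithinAt (fun s => Φ s ^ (-q))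
      (Φ' t * -q * Φ t ^ (-q - 1)) (Ici t₀) t := fun t ht =>
    (hΦ t ht).rpow_const (Or.inl (hΦpos t ht).ne')
  have hlin : ∀ t ≥ t₀, c * (1 + t) ≤ Φ t ^ (-q) := by
    intro t ht
    refine image_le_of_deriv_right_le_deriv_boundary (a := t₀) (b := t)
      (f := fun s => c * (1 + s)) (f' := fun _ => c) (B := fun s => Φ s ^ (-q))
      (B' := fun s => Φ' s * -q * Φ s ^ (-q - 1)) (by fun_prop) ?_ ?_ ?_ ?_ ?_ ⟨ht, le_rfl⟩
    · intro x _
      simpa using (((hasDerivAt_id x).const_add 1).const_mul c).hasDerivWithinAt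
    · have := (le_div_iff₀ h1).1 (min_le_left (Φ t₀ ^ (-q) / (1 + t₀)) (q * C₂))
      exact this
    · exact fun x hx => ((hd x hx.1).continuousWithinAt).mono Icc_subset_Ici_self
    · exact fun x hx => (hd x hx.1).mono (Ici_subset_Ici.2 hx.1)
    · intro x hx
      have hp := hΦpos x hx.1
      -- The exponents `-q - 1` and `2 (1 - θ)` cancel.
      have hone : Φ x ^ (2 * (1 - θ)) * Φ x ^ (-q - 1) = 1 := by
        rw [← Real.rpow_add hp, hq]
        ring_nf
        exact Real.rpow_zero _
      have hle : C₂ * Φ x ^ (2 * (1 - θ)) ≤ -Φ' x := by linarith [hii x hx.1]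
      have hmul := mul_le_mul_of_nonneg_right hle
        (mul_pos hq0 (Real.rpow_pos_of_pos hp (-q - 1))).le
      calc c ≤ q * C₂ := min_le_right _ _
        _ = C₂ * Φ x ^ (2 * (1 - θ)) * (q * Φ x ^ (-q - 1)) := by
          linear_combination (-(q * C₂)) * hone
        _ ≤ _ := hmul.trans_eq (by ring)
  have hnp : -(θ / q) ≤ 0 := neg_nonpos.2 (div_pos hθ0 hq0).le
  refine ⟨c ^ (-(θ / q)), Real.rpow_pos_of_pos hc0 _, fun t ht => ?_⟩
  have ht1 : 0 < 1 + t := by linarith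
  calc Φ t ^ θ = (Φ t ^ (-q)) ^ (-(θ / q)) := by
        rw [← Real.rpow_mul (hΦpos t ht).le]
        congr 1
        field_simp
    _ ≤ (c * (1 + t)) ^ (-(θ / q)) :=
        Real.rpow_le_rpow_of_nonpos (mul_pos hc0 ht1) (hlin t ht) hnp
    _ = _ := Real.mul_rpow hc0.le ht1.le

/-- The Łojasiewicz–Simon inequality controls the distance travelled after time `s` by the
energy gap at time `s`. -/
lemma dist_le_energy_rpow {X : Type*} [NormedAddCommGroup X] [NormedSpace ℝ X]
    {t₀ θ C₁ : ℝ} (hC₁ : 0 < C₁) {u u' : ℝ → X} {Φ Φ' : ℝ → ℝ}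
    (hu : ∀ t ≥ t₀, HasDerivWithinAt u (u' t) (Ici t₀) t)
    (hΦ : ∀ t ≥ t₀, HasDerivWithinAt Φ (Φ' t) (Ici t₀) t)
    (hΦpos : ∀ t ≥ t₀, 0 < Φ t)
    (hi : ∀ t ≥ t₀, θ * Φ t ^ (θ - 1) * Φ' t ≤ -(C₁ * ‖u' t‖))
    {s t : ℝ} (hs : t₀ ≤ s) (hst : s ≤ t) : ‖u t - u s‖ ≤ Φ s ^ θ / C₁ := by
  have hd : ∀ x ≥ t₀, HasDerivWithinAt (fun r => (Φ s ^ θ - Φ r ^ θ) / C₁)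
      (-(Φ' x * θ * Φ x ^ (θ - 1)) / C₁) (Ici t₀) x := fun x hx =>
    (((hΦ x hx).rpow_const (Or.inl (hΦpos x hx).ne')).const_sub _).div_const _
  have key : ‖u t - u s‖ ≤ (Φ s ^ θ - Φ t ^ θ) / C₁ := by
    refine image_norm_le_of_norm_deriv_right_le_deriv_boundary' (a := s) (b := t)
      (f := fun r => u r - u s) (f' := u') (B := fun r => (Φ s ^ θ - Φ r ^ θ) / C₁)
      (B' := fun x => -(Φ' x * θ * Φ x ^ (θ - 1)) / C₁) ?_ ?_ ?_ ?_ ?_ ?_ ⟨hst, le_rfl⟩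
    · exact fun x hx => (((hu x (hs.trans hx.1)).sub_const _).continuousWithinAt).mono
        fun y hy => hs.trans hy.1
    · exact fun x hx => ((hu x (hs.trans hx.1)).sub_const _).mono
        (Ici_subset_Ici.2 (hs.trans hx.1))
    · simp
    · exact fun x hx => ((hd x (hs.trans hx.1)).continuousWithinAt).mono
        fun y hy => hs.trans hy.1
    · exact fun x hx => (hd x (hs.trans hx.1)).mono (Ici_subset_Ici.2 (hs.trans hx.1))
    · intro x hx
      rw [le_div_iff₀ hC₁]
      linarith [hi x (hs.trans hx.1)]
  refine key.trans ?_
  gcongr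
  linarith [Real.rpow_nonneg (hΦpos t (hs.trans hst)).le θ]

/-- Abstract mechanism behind the convergence-rate estimate (1.8) of the paper: the
Łojasiewicz–Simon inequality `-(d/dt)(Φ^θ) ≥ C₁ ‖u'‖` together with the differential
inequality `Φ' + C₂ Φ^{2(1-θ)} ≤ 0` for the energy gap `Φ > 0` gives the algebraic
convergence rate `(1+t)^{-θ/(1-2θ)}` of the trajectory `u` to a limit `u_∞`. -/
theorem stmt6 {X : Type*} [NormedAddCommGroup X] [NormedSpace ℝ X] [CompleteSpace X]
    (t₀ θ C₁ C₂ : ℝ) (ht₀ : 0 ≤ t₀) (hθ : θ ∈ Ioo 0 (1 / 2)) (hC₁ : 0 < C₁) (hC₂ : 0 < C₂)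
    (u : ℝ → X) (u' : ℝ → X) (Φ Φ' : ℝ → ℝ)
    (hu : ∀ t ≥ t₀, HasDerivWithinAt u (u' t) (Ici t₀) t)
    (hu'c : ContinuousOn u' (Ici t₀))
    (hΦ : ∀ t ≥ t₀, HasDerivWithinAt Φ (Φ' t) (Ici t₀) t)
    (hΦpos : ∀ t ≥ t₀, 0 < Φ t)
    (hi : ∀ t ≥ t₀, θ * Φ t ^ (θ - 1) * Φ' t ≤ -(C₁ * ‖u' t‖))
    (hii : ∀ t ≥ t₀, Φ' t + C₂ * Φ t ^ (2 * (1 - θ)) ≤ 0) :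
    ∃ u_inf : X, ∃ C > 0, ∀ t ≥ t₀,
      ‖u t - u_inf‖ ≤ C * (1 + t) ^ (-(θ / (1 - 2 * θ))) := by
  obtain ⟨K, hK, hdecay⟩ := energy_rpow_decay ht₀ hθ hC₂ hΦ hΦpos hii
  have hp : 0 < θ / (1 - 2 * θ) := div_pos hθ.1 (by linarith [hθ.2])
  have hbound : ∀ s ≥ t₀, ∀ t ≥ s,
      ‖u t - u s‖ ≤ K / C₁ * (1 + s) ^ (-(θ / (1 - 2 * θ))) := by
    intro s hs t hst
    refine (dist_le_energy_rpow hC₁ hu hΦ hΦpos hi hs hst).trans ?_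
    rw [div_mul_eq_mul_div]
    gcongr
    exact hdecay s hs
  have hmax : Tendsto (fun t : ℝ => max t t₀) atTop atTop :=
    tendsto_atTop_mono (fun t => le_max_left t t₀) tendsto_id
  have hb0 : Tendsto (fun t : ℝ => K / C₁ * (1 + max t t₀) ^ (-(θ / (1 - 2 * θ))))
      atTop (𝓝 0) := by
    simpa using ((tendsto_rpow_neg_atTop hp).comp
      (tendsto_atTop_add_const_left _ 1 hmax)).const_mul (K / C₁)
  -- `u` is unconstrained before `t₀`, so the Cauchy criterion is applied to `u (max t t₀)`.
  have hcau : CauchySeq (fun t : ℝ => u (max t t₀)) := by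
    refine cauchySeq_of_le_tendsto_0' _ (fun s t hst => ?_) hb0
    rw [dist_comm, dist_eq_norm]
    exact hbound _ (le_max_right _ _) _ (max_le_max_right _ hst)
  obtain ⟨u_inf, hlim⟩ := cauchySeq_tendsto_of_complete hcau
  refine ⟨u_inf, K / C₁, div_pos hK hC₁, fun s hs => ?_⟩
  rw [norm_sub_rev]
  refine le_of_tendsto (hlim.sub_const (u s)).norm ?_
  filter_upwards [eventually_ge_atTop s] with t ht
  exact hbound s hs _ (ht.trans (le_max_left _ _))
end

section
/- Let X be a normed vector space, u : [0,∞) → X differentiable with continuous derivative u', and Φ : [0,∞) → ℝ nonincreasing and differentiable. Let L ∈ ℝ, θ ∈ (0,1), C₁ > 0, β > 0 and u_∞ ∈ X. Assume: (i) Φ(t) > L for all t ≥ 0; (ii) there is a sequence t_n → ∞ with ‖u(t_n) − u_∞‖ → 0 and Φ(t_n) → L; (iii) for every t ≥ 0 with ‖u(t) − u_∞‖ < β one has θ·(Φ(t) − L)^{θ−1}·Φ'(t) ≤ −C₁·‖u'(t)‖. Then u(t) → u_∞ as t → ∞; moreover there exists t₀ ≥ 0 such that ‖u(t) − u_∞‖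 < β for all t ≥ t₀. -/
/-! With `H = (Φ - L) ^ θ`, the differential inequality reads `C₁ ‖u'‖ ≤ -H'` while the
trajectory is within `β` of `u_inf`, so on any time interval `[a, b]` spent in that ball the
displacement `‖u b - u a‖` is at most `(H a - H b) / C₁ ≤ H a / C₁`
(`norm_sub_le_of_deriv_le`). Along the given sequence both `‖u - u_inf‖` and `H` tend to `0`.
Hence for every `ε ≤ β` there is a time `a` at which each of `‖u a - u_inf‖` and `H a / C₁` is
below `ε / 2`, and a first exit time from the `ε`-ball after `a` would contradict the
displacement bound (`trapped`). The displacement bound comes from the mean value inequality,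
so no integral, and no completeness of `X`, is involved. -/

open Set Filter

/-- Displacement bound: where `C ‖u'‖ ≤ -H'`, the trajectory moves by at most the drop of `H`
divided by `C`. -/
theorem norm_sub_le_of_deriv_le {X : Type*} [NormedAddCommGroup X] [NormedSpace ℝ X]
    {u u' : ℝ → X} {H H' : ℝ → ℝ} {C : ℝ} (hC : 0 < C)
    (hu : ∀ t ≥ (0 : ℝ), HasDerivWithinAt u (u' t) (Ici 0) t)
    (hH : ∀ t ≥ (0 : ℝ), HasDerivWithinAt H (H' t) (Ici 0) t)
    {a b : ℝ} (ha : 0 ≤ a) (hab : a ≤ b)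
    (h : ∀ t ∈ Ico a b, H' t ≤ -(C * ‖u' t‖)) :
    ‖u b - u a‖ ≤ (H a - H b) / C := by
  have hsub : Icc a b ⊆ Ici 0 := fun x hx => ha.trans hx.1
  have key := image_norm_le_of_norm_deriv_right_le_deriv_boundary'
    (f := fun t => u t - u a) (f' := u') (a := a) (b := b)
    (B := fun t => (H a - H t) / C) (B' := fun t => (-H' t) / C)
    (fun x hx => ((hu x (hsub hx)).continuousWithinAt.mono hsub).sub
      continuousWithinAt_const)
    (fun x hx => ((hu x (ha.trans hx.1)).mono (Ici_subset_Ici.2 (ha.trans hx.1))).sub_const _)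
    (by simp)
    (fun x hx => (continuousWithinAt_const.sub
      ((hH x (hsub hx)).continuousWithinAt.mono hsub)).div_const C)
    (fun x hx => (((hH x (ha.trans hx.1)).mono
      (Ici_subset_Ici.2 (ha.trans hx.1))).const_sub _).div_const C)
    (fun x hx => by
      rw [le_div_iff₀ hC]
      linarith [h x hx])
  exact key (right_mem_Icc.2 hab)

/-- A trajectory that starts within `ε / 2` of `u_inf`, with remaining energy budget `H a / C`
below `ε / 2`, never leaves the `ε`-ball, provided `C ‖u'‖ ≤ -H'` holds inside that ball. -/
theorem trapped {X : Type*} [NormedAddCommGroup X] [NormedSpace ℝ X]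
    {u u' : ℝ → X} {H H' : ℝ → ℝ} {C ε : ℝ} {u_inf : X} (hC : 0 < C)
    (hu : ∀ t ≥ (0 : ℝ), HasDerivWithinAt u (u' t) (Ici 0) t)
    (hH : ∀ t ≥ (0 : ℝ), HasDerivWithinAt H (H' t) (Ici 0) t)
    (hH0 : ∀ t ≥ (0 : ℝ), 0 ≤ H t)
    (h : ∀ t ≥ (0 : ℝ), ‖u t - u_inf‖ < ε → H' t ≤ -(C * ‖u' t‖))
    {a : ℝ} (ha : 0 ≤ a) (hua : ‖u a - u_inf‖ < ε / 2) (hHa : H a / C < ε / 2) :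
    ∀ t ≥ a, ‖u t - u_inf‖ < ε := by
  by_contra! hcon
  obtain ⟨t, hta, ht⟩ := hcon
  have hcont : ContinuousOn (fun t => ‖u t - u_inf‖) (Ici a) := fun x hx =>
    (((hu x (ha.trans hx)).continuousWithinAt.mono (Ici_subset_Ici.2 ha)).sub
      continuousWithinAt_const).norm
  -- The set of times after `a` spent outside the ball; its infimum is the first exit time.
  let S : Set ℝ := Ici a ∩ (fun t => ‖u t - u_inf‖) ⁻¹' Ici ε
  have hS : IsClosed S := hcont.preimage_isClosed_of_isClosed isClosed_Ici isClosed_Ici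
  have hbdd : BddBelow S := ⟨a, fun x hx => hx.1⟩
  obtain ⟨hsa, hs⟩ : sInf S ∈ S := hS.csInf_mem ⟨t, hta, ht⟩ hbdd
  have hsa' : a ≤ sInf S := hsa
  have hs' : ε ≤ ‖u (sInf S) - u_inf‖ := hs
  have hmove := norm_sub_le_of_deriv_le hC hu hH ha hsa' fun x hx =>
    h x (ha.trans hx.1) (by
      by_contra! hx'
      exact absurd (csInf_le hbdd ⟨hx.1, hx'⟩) (not_le.2 hx.2))
  have hdrop : (H a - H (sInf S)) / C ≤ H a / C := by
    gcongr
    linarith [hH0 _ (ha.trans hsa')]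
  have htri := norm_sub_le_norm_sub_add_norm_sub (u (sInf S)) (u a) u_inf
  linarith

/-- Abstract "neighborhood trapping" argument of Section 3.1 of the paper: once a
subsequence of the trajectory approaches a point `u_∞` where a Łojasiewicz–Simon type
differential inequality `-(d/dt)(Φ - L)^θ ≥ C₁ ‖u'‖` holds in a `β`-neighborhood of
`u_∞` (with `Φ` the decreasing energy and `L` its limit), the whole trajectory stays in
the neighborhood after some time and converges to `u_∞`. -/
theorem stmt7 {X : Type*} [NormedAddCommGroup X] [NormedSpace ℝ X]
    (u : ℝ → X) (u' : ℝ → X) (Φ Φ' : ℝ → ℝ) (L θ C₁ β : ℝ) (u_inf : X)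
    (hθ : θ ∈ Ioo 0 1) (hC₁ : 0 < C₁) (hβ : 0 < β)
    (hu : ∀ t ≥ (0 : ℝ), HasDerivWithinAt u (u' t) (Ici 0) t)
    (hu'c : ContinuousOn u' (Ici 0))
    (hΦd : ∀ t ≥ (0 : ℝ), HasDerivWithinAt Φ (Φ' t) (Ici 0) t)
    (hΦmono : AntitoneOn Φ (Ici 0))
    (hi : ∀ t ≥ (0 : ℝ), L < Φ t)
    (hseq : ∃ tseq : ℕ → ℝ, Tendsto tseq atTop atTop ∧
        Tendsto (fun n => ‖u (tseq n) - u_inf‖) atTop (nhds 0) ∧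
        Tendsto (fun n => Φ (tseq n)) atTop (nhds L))
    (hiii : ∀ t ≥ (0 : ℝ), ‖u t - u_inf‖ < β →
        θ * (Φ t - L) ^ (θ - 1) * Φ' t ≤ -(C₁ * ‖u' t‖)) :
    Tendsto u atTop (nhds u_inf) ∧ ∃ t₀ ≥ (0 : ℝ), ∀ t ≥ t₀, ‖u t - u_inf‖ < β := by
  obtain ⟨hθ0, hθ1⟩ := hθ
  obtain ⟨s, hs, hus, hΦs⟩ := hseq
  have hH : ∀ t ≥ (0 : ℝ), HasDerivWithinAt (fun t => (Φ t - L) ^ θ)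
      (θ * (Φ t - L) ^ (θ - 1) * Φ' t) (Ici 0) t := fun t ht => by
    have := ((hΦd t ht).sub_const L).rpow_const (p := θ) (Or.inl (sub_pos.2 (hi t ht)).ne')
    convert this using 1
    ring
  have hHs : Tendsto (fun n => (Φ (s n) - L) ^ θ / C₁) atTop (nhds 0) := by
    have := ((hΦs.sub_const L).rpow_const (p := θ) (Or.inr hθ0.le)).div_const C₁
    simpa [Real.zero_rpow hθ0.ne'] using this
  have main : ∀ ε > 0, ε ≤ β → ∃ a ≥ (0 : ℝ), ∀ t ≥ a, ‖u t - u_inf‖ < ε := by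
    intro ε hε hεβ
    obtain ⟨n, h0, h1, h2⟩ := ((hs.eventually_ge_atTop 0).and
      ((hus.eventually_lt_const (half_pos hε)).and
        (hHs.eventually_lt_const (half_pos hε)))).exists
    exact ⟨s n, h0, trapped hC₁ hu hH
      (fun t ht => Real.rpow_nonneg (sub_pos.2 (hi t ht)).le θ)
      (fun t ht htε => hiii t ht (htε.trans_le hεβ)) h0 h1 h2⟩
  refine ⟨?_, main β hβ le_rfl⟩
  rw [Metric.tendsto_atTop]
  intro ε hε
  obtain ⟨a, -, ha⟩ := main (min ε β) (lt_min hε hβ) (min_le_right _ _)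
  exact ⟨a, fun t ht => by
    rw [dist_eq_norm]
    exact (ha t ht).trans_le (min_le_left _ _)⟩
end

section
/- Let K, M > 0 and B ∈ ℝ. Suppose y : [0,∞) → ℝ is nonnegative, continuous and differentiable, that ∫_t^{t+1} y(s) ds ≤ M for every t ≥ 0, and that y'(t) ≤ 2K·y(t) at every t ≥ 0 with y(t) ≤ B. If y(0) < B and max(y(0), 2M) + 2KM < B, then y(t) < B for all t ≥ 0. -/
/-!
At a first time `T` with `y T ≥ B`, the inequality `y' ≤ 2K y` holds on `[0, T)`, so for every
`s` with `max 0 (T - 1) ≤ s ≤ T`, integration gives `y T - y s ≤ 2K ∫_s^T y ≤ 2KM`.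
Some such `s` has `y s ≤ max (y 0) (2M)`: take `s = 0` if `T ≤ 1`, and otherwise use that `y`
cannot exceed `2M` throughout `[T - 1, T]`, where its integral is at most `M`.
Hence `B ≤ y T ≤ max (y 0) (2M) + 2KM < B`, a contradiction.
-/

open MeasureTheory Set

/-- Real-variable continuation (bootstrap) argument at the heart of the large-viscosity
Lemma 4.2 of the paper: if `y` satisfies `y' ≤ 2K y` as long as `y ≤ B`, has unit-interval
integrals bounded by `M`, starts below `B`, and `max(y 0, 2M) + 2KM < B`, then the
threshold `B` is never reached. -/
theorem stmt8 (K M B : ℝ) (hK : 0 < K) (hM : 0 < M)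
    (y y' : ℝ → ℝ)
    (hy_nonneg : ∀ t ≥ (0 : ℝ), 0 ≤ y t)
    (hy_cont : ContinuousOn y (Ici 0))
    (hderiv : ∀ t ≥ (0 : ℝ), HasDerivWithinAt y (y' t) (Ici 0) t)
    (hint : ∀ t ≥ (0 : ℝ), (∫ s in t..(t + 1), y s) ≤ M)
    (hineq : ∀ t ≥ (0 : ℝ), y t ≤ B → y' t ≤ 2 * K * y t)
    (h0 : y 0 < B)
    (hbig : max (y 0) (2 * M) + 2 * K * M < B) :
    ∀ t ≥ (0 : ℝ), y t < B := by
  by_contra! hcon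
  obtain ⟨t₁, ht₁, hBt₁⟩ := hcon
  have hintg : ∀ a b : ℝ, 0 ≤ a → a ≤ b → IntervalIntegrable y volume a b := fun a b ha hab =>
    (hy_cont.mono fun x hx => ha.trans hx.1).intervalIntegrable_of_Icc hab
  obtain ⟨T, ⟨⟨hT0, -⟩, hBT⟩, hTmin⟩ : ∃ T, IsLeast (Icc 0 t₁ ∩ y ⁻¹' Ici B) T := by
    have hclosed : IsClosed (Icc 0 t₁ ∩ y ⁻¹' Ici B) :=
      (hy_cont.mono fun x hx => hx.1).preimage_isClosed_of_isClosed isClosed_Icc isClosed_Ici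
    exact (isCompact_Icc.of_isClosed_subset hclosed inter_subset_left).exists_isLeast
      ⟨t₁, ⟨ht₁, le_rfl⟩, hBt₁⟩
  have hbelow : ∀ x, 0 ≤ x → x < T → y x < B := by
    intro x hx hxT
    by_contra! h
    rcases le_total x t₁ with hxt | hxt
    · exact absurd (hTmin ⟨⟨hx, hxt⟩, h⟩) (not_le.mpr hxT)
    · exact absurd (hTmin ⟨⟨ht₁, le_rfl⟩, hBt₁⟩) (not_le.mpr (hxt.trans_lt hxT))
  obtain ⟨s, hs0, hsT, hTs, hys⟩ :
      ∃ s, 0 ≤ s ∧ s ≤ T ∧ T ≤ s + 1 ∧ y s ≤ max (y 0) (2 * M) := by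
    rcases le_total T 1 with hT1 | hT1
    · exact ⟨0, le_rfl, hT0, by linarith, le_max_left _ _⟩
    · by_contra! h
      have hlow : ∀ x ∈ Icc (T - 1) (T - 1 + 1), 2 * M ≤ y x := fun x hx =>
        (le_max_right _ _).trans
          (h x (by linarith [hx.1]) (by linarith [hx.2]) (by linarith [hx.1])).le
      have h1 := intervalIntegral.integral_mono_on (by linarith : T - 1 ≤ T - 1 + 1)
        intervalIntegrable_const (hintg (T - 1) (T - 1 + 1) (by linarith) (by linarith)) hlow
      have h2 := hint (T - 1) (by linarith)
      rw [intervalIntegral.integral_const, smul_eq_mul] at h1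
      linarith
  have hgrow : y T - y s ≤ ∫ x in s..T, 2 * K * y x := by
    refine intervalIntegral.sub_le_integral_of_hasDeriv_right_of_le hsT
      (hy_cont.mono fun x hx => hs0.trans hx.1)
      (fun x hx => (hderiv x (hs0.trans hx.1.le)).mono
        fun z hz => (hs0.trans hx.1.le).trans (le_of_lt hz)) ?_
      (fun x hx => hineq x (hs0.trans hx.1.le) (hbelow x (hs0.trans hx.1.le) hx.2).le)
    exact (continuousOn_const.mul (hy_cont.mono fun x hx => hs0.trans hx.1)).integrableOn_Icc
  rw [intervalIntegral.integral_const_mul] at hgrow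
  have htail : 0 ≤ ∫ x in T..(s + 1), y x :=
    intervalIntegral.integral_nonneg hTs fun x hx => hy_nonneg x (hT0.trans hx.1)
  have hsplit := intervalIntegral.integral_add_adjacent_intervals
    (hintg s T hs0 hsT) (hintg T (s + 1) hT0 hTs)
  have hM' : ∫ x in s..T, y x ≤ M := by linarith [hint s hs0]
  have hKM := mul_le_mul_of_nonneg_left hM' (by positivity : 0 ≤ 2 * K)
  have hBT' : B ≤ y T := hBT
  linarith
end
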